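/- (Fan's minimax theorem) Let X be a nonempty compact Hausdorff topological space and Y an arbitrary nonempty set. Let f : X × Y → ℝ be such that for every y ∈ Y the function f(·,y) is lower semicontinuous on X. Suppose f is convex on X in the sense of Fan (for all x₁,x₂ ∈ X and α,β ∈ [0,1] with α+β=1 there exists x ∈ X with f(x,y) ≤ α f(x₁,y) + β f(x₂,y) for all y ∈ Y) and concave on Y in the sense of Fan (for all y₁,y₂ ∈ Y and α,β ∈ [0,1] with α+β=1 there exists y ∈ Y with f(x,y) ≥ α f(x,y₁) + β f(x,y₂) for all x ∈ X). Then the minimum over x ∈ X of sup_{y∈Y} f(x,y) is attained, and min_{x∈X} sup_{y∈Y} f(x,y) = sup_{y∈Y} min_{x∈X} f(x,y). -/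

import Mathlib

/-!
Statement 2: Ky Fan's minimax theorem (K. Fan, "Minimax theorems", Theorem 2).
-/

noncomputable section

/-!
Let `t` be a real number below the minimum of `x ↦ ⨆ y, f x y`. The open sets `{x | t < f x y}`
cover `X`, so by compactness finitely many `y i` already satisfy `t < f x (y i)` for some `i`, at
every `x`. Hence the set of vectors `v` dominating some `fun i ↦ f x (y i)`, convex because `f` is
convex in the sense of Fan, misses the open orthant `{v | ∀ i, v i < t}`. A hyperplane separating
the two has a nonnegative normal, since the orthant is unbounded below; normalised, this normal
gives weights `w i` with `t ≤ ∑ i, w i * f x (y i)` for all `x`. Concavity in the sense of Fan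
replaces the weighted average by a single `f x y₀`, so that `t ≤ ⨅ x, f x y₀`.
-/

open Set

section Separation

theorem map_nonneg_of_isLowerSet_of_bddAbove_image {E G F : Type*} [AddCommGroup E] [Preorder E]
    [IsOrderedAddMonoid E] [AddCommGroup G] [LinearOrder G] [IsOrderedAddMonoid G] [Archimedean G]
    [FunLike F E G] [AddMonoidHomClass F E G] (φ : F) {B : Set E} (hlower : IsLowerSet B)
    (hne : B.Nonempty) (hbdd : BddAbove (φ '' B)) {x : E} (hx : 0 ≤ x) : 0 ≤ φ x := by
  obtain ⟨b, hb⟩ := hne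
  obtain ⟨u, hu⟩ := hbdd
  by_contra! hneg
  obtain ⟨n, hn⟩ := exists_lt_nsmul (neg_pos.2 hneg) (u - φ b)
  have hmem : b - n • x ∈ B := hlower (sub_le_self b (nsmul_nonneg hx n)) hb
  refine (hu (mem_image_of_mem φ hmem)).not_gt ?_
  calc u < φ b + n • -φ x := sub_lt_iff_lt_add'.1 hn
    _ = φ (b - n • x) := by rw [map_sub, map_nsmul, smul_neg, sub_eq_add_neg]

variable {ι : Type*} [Fintype ι]

theorem exists_mem_stdSimplex_eq_map_one_mul_sum {𝕜 : Type*} [Field 𝕜] [LinearOrder 𝕜]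
    [IsStrictOrderedRing 𝕜] {φ : (ι → 𝕜) →ₗ[𝕜] 𝕜} (hφ : ∀ v, 0 ≤ v → 0 ≤ φ v) (hφ₀ : φ ≠ 0) :
    0 < φ 1 ∧ ∃ w ∈ stdSimplex 𝕜 ι, ∀ v, φ v = φ 1 * ∑ i, w i * v i := by
  classical
  have hcoord : ∀ i, 0 ≤ φ (Pi.single i 1) := fun i ↦ hφ _ (Pi.single_nonneg.2 zero_le_one)
  have hrepr : ∀ v, φ v = ∑ i, φ (Pi.single i 1) * v i := fun v ↦ by
    conv_lhs => rw [pi_eq_sum_univ' v]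
    simp only [map_sum, map_smul, smul_eq_mul, mul_comm]
  have hone : φ 1 = ∑ i, φ (Pi.single i 1) := by simp [hrepr 1]
  have hpos : 0 < φ 1 := by
    refine (hφ 1 zero_le_one).lt_of_ne' fun hzero ↦ hφ₀ (LinearMap.ext fun v ↦ ?_)
    have hcoord_zero := (Fintype.sum_eq_zero_iff_of_nonneg hcoord).1 (hone ▸ hzero)
    simp [hrepr v, fun i ↦ congrFun hcoord_zero i]
  refine ⟨hpos, fun i ↦ φ (Pi.single i 1) / φ 1,
    ⟨fun i ↦ div_nonneg (hcoord i) hpos.le, ?_⟩, fun v ↦ ?_⟩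
  · rw [← Finset.sum_div, ← hone, div_self hpos.ne']
  · rw [hrepr v, Finset.mul_sum]
    exact Finset.sum_congr rfl fun i _ ↦ by field_simp

theorem exists_mem_stdSimplex_forall_le_sum_of_convex {A : Set (ι → ℝ)} (hconv : Convex ℝ A)
    (hne : A.Nonempty) {t : ℝ} (ht : ∀ v ∈ A, ∃ i, t ≤ v i) :
    ∃ w ∈ stdSimplex ℝ ι, ∀ v ∈ A, t ≤ ∑ i, w i * v i := by
  let B : Set (ι → ℝ) := univ.pi fun _ ↦ Iio t
  have hB_lower : IsLowerSet B := fun _ _ hle hv i _ ↦ (hle i).trans_lt (hv i trivial)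
  have hB_const : ∀ s < t, (fun _ ↦ s) ∈ B := fun s hs _ _ ↦ hs
  have hB_ne : B.Nonempty := (exists_lt t).imp' (fun s _ ↦ s) hB_const
  have hdisj : Disjoint B A := disjoint_left.2 fun v hvB hvA ↦
    let ⟨i, hi⟩ := ht v hvA
    (hvB i trivial).not_ge hi
  obtain ⟨φ, u, hφB, hφA⟩ := geometric_hahn_banach_open (convex_pi fun _ _ ↦ convex_Iio t)
    (isOpen_set_pi finite_univ fun _ _ ↦ isOpen_Iio) hconv hdisj
  have hφ : ∀ v, 0 ≤ v → 0 ≤ φ.toLinearMap v := fun v ↦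
    map_nonneg_of_isLowerSet_of_bddAbove_image _ hB_lower hB_ne
      ⟨u, forall_mem_image.2 fun b hb ↦ (hφB b hb).le⟩
  have hφ₀ : φ.toLinearMap ≠ 0 := fun hzero ↦ by
    obtain ⟨b, hb⟩ := hB_ne
    obtain ⟨a, ha⟩ := hne
    have hba : φ.toLinearMap b < φ.toLinearMap a := (hφB b hb).trans_le (hφA a ha)
    simp [hzero] at hba
  obtain ⟨hpos, w, hw, hφw⟩ := exists_mem_stdSimplex_eq_map_one_mul_sum hφ hφ₀
  refine ⟨w, hw, fun v hv ↦ le_of_forall_lt fun s hs ↦ ?_⟩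
  have hsv : φ.toLinearMap (fun _ ↦ s) < φ.toLinearMap v :=
    (hφB _ (hB_const s hs)).trans_le (hφA v hv)
  rw [hφw, hφw v, ← Finset.sum_mul, hw.2, one_mul] at hsv
  exact lt_of_mul_lt_mul_left hsv hpos.le

end Separation

section FanConvexity

variable {X Y : Type*} {f : X → Y → ℝ}

/-- `f` is convex on `X` in the sense of Ky Fan: `X` carries no linear structure, and a point of `X`
is only required to do at least as well as the convex combination of two values, for all `y`
simultaneously. -/
def IsFanConvex (f : X → Y → ℝ) : Prop :=
  ∀ x₁ x₂ : X, ∀ α β : ℝ, 0 ≤ α → 0 ≤ β → α + β = 1 →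
    ∃ x : X, ∀ y : Y, f x y ≤ α * f x₁ y + β * f x₂ y

/-- `f` is concave on `Y` in the sense of Ky Fan, i.e. `fun y x ↦ -f x y` is convex in that sense;
the inequality is spelled out to avoid the negations. -/
def IsFanConcave (f : X → Y → ℝ) : Prop :=
  ∀ y₁ y₂ : Y, ∀ α β : ℝ, 0 ≤ α → 0 ≤ β → α + β = 1 →
    ∃ y : Y, ∀ x : X, α * f x y₁ + β * f x y₂ ≤ f x y

theorem IsFanConvex.comp_right {ι : Type*} (hf : IsFanConvex f) (y : ι → Y) :
    IsFanConvex fun x i ↦ f x (y i) := fun x₁ x₂ α β hα hβ hαβ ↦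
  (hf x₁ x₂ α β hα hβ hαβ).imp fun _ hx i ↦ hx (y i)

theorem IsFanConvex.convex_upperClosure_range (hf : IsFanConvex f) :
    Convex ℝ (upperClosure (range f) : Set (Y → ℝ)) := by
  rintro v ⟨_, ⟨x₁, rfl⟩, hv⟩ w ⟨_, ⟨x₂, rfl⟩, hw⟩ α β hα hβ hαβ
  obtain ⟨x, hx⟩ := hf x₁ x₂ α β hα hβ hαβ
  refine ⟨f x, mem_range_self x, le_trans (b := α • f x₁ + β • f x₂) hx ?_⟩
  gcongr

theorem IsFanConcave.convex_lowerClosure_range (hf : IsFanConcave f) :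
    Convex ℝ (lowerClosure (range fun y x ↦ f x y) : Set (X → ℝ)) := by
  rintro v ⟨_, ⟨y₁, rfl⟩, hv⟩ w ⟨_, ⟨y₂, rfl⟩, hw⟩ α β hα hβ hαβ
  obtain ⟨y, hy⟩ := hf y₁ y₂ α β hα hβ hαβ
  refine ⟨_, mem_range_self y, le_trans (b := α • (f · y₁) + β • (f · y₂)) ?_ hy⟩
  gcongr

theorem IsFanConcave.exists_forall_sum_le {ι : Type*} [Fintype ι] (hf : IsFanConcave f)
    {w : ι → ℝ} (hw : w ∈ stdSimplex ℝ ι) (y : ι → Y) :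
    ∃ y₀, ∀ x, ∑ i, w i * f x (y i) ≤ f x y₀ := by
  obtain ⟨_, ⟨y₀, rfl⟩, hy₀⟩ := hf.convex_lowerClosure_range.sum_mem (fun i _ ↦ hw.1 i) hw.2
    fun i _ ↦ subset_lowerClosure (mem_range_self (y i))
  exact ⟨y₀, fun x ↦ by simpa using hy₀ x⟩

theorem IsFanConvex.exists_forall_le_of_isFanConcave {ι : Type*} [Finite ι] [Nonempty X]
    (hconvex : IsFanConvex f) (hconcave : IsFanConcave f) (y : ι → Y) {t : ℝ}
    (ht : ∀ x, ∃ i, t ≤ f x (y i)) : ∃ y₀, ∀ x, t ≤ f x y₀ := by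
  have := Fintype.ofFinite ι
  obtain ⟨w, hw, htw⟩ : ∃ w ∈ stdSimplex ℝ ι,
      ∀ v ∈ upperClosure (range fun x i ↦ f x (y i)), t ≤ ∑ i, w i * v i := by
    refine exists_mem_stdSimplex_forall_le_sum_of_convex
      (hconvex.comp_right y).convex_upperClosure_range
      ((range_nonempty _).mono subset_upperClosure) ?_
    rintro v ⟨_, ⟨x, rfl⟩, hxv⟩
    exact (ht x).imp fun i hi ↦ hi.trans (hxv i)
  obtain ⟨y₀, hy₀⟩ := hconcave.exists_forall_sum_le hw y
  exact ⟨y₀, fun x ↦ (htw _ (subset_upperClosure (mem_range_self x))).trans (hy₀ x)⟩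

end FanConvexity

section Compactness

variable {X Y : Type*} [TopologicalSpace X] [CompactSpace X]

theorem exists_finset_forall_exists_lt_of_lowerSemicontinuous {β : Type*} [Preorder β]
    {f : X → Y → β} (hlsc : ∀ y, LowerSemicontinuous fun x ↦ f x y) {t : β}
    (ht : ∀ x, ∃ y, t < f x y) : ∃ s : Finset Y, ∀ x, ∃ y ∈ s, t < f x y := by
  obtain ⟨s, hs⟩ := isCompact_univ.elim_finite_subcover (fun y ↦ {x | t < f x y})
    (fun y ↦ (hlsc y).isOpen_preimage t) fun x _ ↦ mem_iUnion.2 (ht x)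
  exact ⟨s, fun x ↦ by simpa using hs (mem_univ x)⟩

theorem exists_forall_iSup_le_iSup_of_lowerSemicontinuous [Nonempty X] {β : Type*}
    [CompleteLinearOrder β] {f : X → Y → β} (hlsc : ∀ y, LowerSemicontinuous fun x ↦ f x y) :
    ∃ x₀, ∀ x, ⨆ y, f x₀ y ≤ ⨆ y, f x y := by
  obtain ⟨x₀, -, hx₀⟩ := ((lowerSemicontinuous_iSup hlsc).lowerSemicontinuousOn univ).exists_isMinOn
    univ_nonempty isCompact_univ
  exact ⟨x₀, fun x ↦ hx₀ (mem_univ x)⟩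

theorem fan_minimax_general [Nonempty X] {f : X → Y → ℝ}
    (hlsc : ∀ y, LowerSemicontinuous fun x ↦ f x y)
    (hconvex : IsFanConvex f) (hconcave : IsFanConcave f) :
    ∃ x₀, (∀ x, ⨆ y, (f x₀ y : EReal) ≤ ⨆ y, (f x y : EReal)) ∧
      ⨆ y, (f x₀ y : EReal) = ⨆ y, ⨅ x, (f x y : EReal) := by
  have hlsc_ereal : ∀ y, LowerSemicontinuous fun x ↦ (f x y : EReal) := fun y ↦
    continuous_coe_real_ereal.comp_lowerSemicontinuous (hlsc y) EReal.coe_strictMono.monotone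
  obtain ⟨x₀, hx₀⟩ := exists_forall_iSup_le_iSup_of_lowerSemicontinuous hlsc_ereal
  refine ⟨x₀, hx₀, le_antisymm ?_ (iSup_mono fun y ↦ iInf_le _ x₀)⟩
  refine EReal.ge_of_forall_gt_iff_ge.1 fun t ht ↦ ?_
  have hlt : ∀ x, ∃ y, t < f x y := fun x ↦ by
    simpa only [lt_iSup_iff, EReal.coe_lt_coe_iff] using ht.trans_le (hx₀ x)
  obtain ⟨s, hs⟩ := exists_finset_forall_exists_lt_of_lowerSemicontinuous hlsc hlt
  obtain ⟨y₀, hy₀⟩ : ∃ y₀, ∀ x, t ≤ f x y₀ :=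
    hconvex.exists_forall_le_of_isFanConcave hconcave ((↑) : s → Y) fun x ↦
      let ⟨y, hys, hty⟩ := hs x
      ⟨⟨y, hys⟩, hty.le⟩
  exact le_iSup_of_le y₀ (le_iInf fun x ↦ EReal.coe_le_coe (hy₀ x))

end Compactness

/-- **Fan's minimax theorem.** Let `X` be a nonempty compact Hausdorff space and `Y`
an arbitrary nonempty set. Let `f : X × Y → ℝ` be lower semicontinuous in `x` for
every fixed `y`, convex on `X` in the sense of Fan and concave on `Y` in the sense of
Fan. Then the minimum over `x ∈ X` of `sup_{y ∈ Y} f(x,y)` is attained, and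
`min_{x ∈ X} sup_{y ∈ Y} f(x,y) = sup_{y ∈ Y} min_{x ∈ X} f(x,y)`
(an equality in the extended reals, as the suprema may be `+∞`). -/
theorem fan_minimax {X Y : Type*} [TopologicalSpace X] [CompactSpace X] [T2Space X]
    [Nonempty X] [Nonempty Y] (f : X → Y → ℝ)
    (hlsc : ∀ y : Y, LowerSemicontinuous fun x : X => f x y)
    (hconvex : ∀ x₁ x₂ : X, ∀ α β : ℝ, 0 ≤ α → 0 ≤ β → α + β = 1 →
      ∃ x : X, ∀ y : Y, f x y ≤ α * f x₁ y + β * f x₂ y)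
    (hconcave : ∀ y₁ y₂ : Y, ∀ α β : ℝ, 0 ≤ α → 0 ≤ β → α + β = 1 →
      ∃ y : Y, ∀ x : X, α * f x y₁ + β * f x y₂ ≤ f x y) :
    ∃ x₀ : X, (∀ x : X, (⨆ y : Y, ((f x₀ y : ℝ) : EReal)) ≤ ⨆ y : Y, ((f x y : ℝ) : EReal)) ∧
      (⨆ y : Y, ((f x₀ y : ℝ) : EReal)) = ⨆ y : Y, ⨅ x : X, ((f x y : ℝ) : EReal) :=
  fan_minimax_general hlsc hconvex hconcave
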